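/- Let A be an abelian category and X, ω classes of objects such that X is pointed and closed under extensions and ω is a relative quasi-cogenerator in X. If ν is a class of objects of A with Ext¹_A(ν,ν) = 0, Ext¹_A(ω^∧,ν) = 0 and Ext²_A(X,ν) = 0, then Ext¹_{Ch}(C•, V•) = 0 for every chain complex C• all of whose terms lie in X^∧ and every complex V• ∈ ν̃. In particular, Ext¹_{Ch}(C•, V•) = 0 for every C• ∈ Ch(X)^∧ and every V• ∈ ν̃. -/

import Mathlib

/-!
The argument has three ingredients.

*Vanishing on `X^∧`.* Since `ω` is a relative quasi-cogenerator in the extension closed class `X`,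
every `M ∈ X^∧` embeds into some `H ∈ ω^∧` with cokernel `A ∈ X`
(`exists_approximation`, the Auslander-Buchweitz approximation, by induction on the resolution
dimension using pushouts). In the exact sequence `Ext¹(H,V) → Ext¹(M,V) → Ext²(A,V)` the outer
terms vanish for `V ∈ ν`, hence `Ext¹(X^∧, ν) = 0` (`extZero_one_of_mem_resHat`).

*Contractibility.* A complex `V ∈ ν̃` is exact with cycles in `ν`, so `Ext¹(ν,ν) = 0` splits all
the sequences `0 → Zₙ → Vₙ → Zₙ₋₁ → 0`, and `V` is contractible (`exists_contraction`).

*Splitting extensions of complexes.* Let `V ↪ E ↠ K` be exact in chain complexes, with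
`V ∈ ν̃` and `Ext¹(Kₙ, ν) = 0` for all `n`. As `Vₙ` is an extension of objects of `ν`, there are
degreewise retractions `ρₙ : Eₙ → Vₙ`. If `s` is a contraction of `V`, then the chain map
`d(ρs) + (ρs)d : E → V` restricts to `ds + sd = 1` on `V`, so the extension splits
(`extZero_one_chainComplex`).

To conclude from split extensions that `Ext¹` vanishes, one needs that every class in `Ext¹` is the
class of an extension. This is `extZero_one_of_forall_split`, deduced from the fact that each class
in `Ext¹(X,Y)` becomes zero after pulling back along a suitable epimorphism onto `X`
(`exists_epi_mk₀_comp_eq_zero`).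
-/

open CategoryTheory CategoryTheory.Limits

universe w w' v u

namespace BalancedSystems

variable {D : Type u} [Category.{v} D] [Abelian D]

/-- A class of objects is closed under isomorphisms. -/
def IsoClosed (X : Set D) : Prop := ∀ ⦃A B : D⦄, (A ≅ B) → A ∈ X → B ∈ X

/-- `f : A ⟶ B` and `g : B ⟶ E` form a short exact sequence `0 → A → B → E → 0`. -/
def IsSES {A B E : D} (f : A ⟶ B) (g : B ⟶ E) : Prop :=
  ∃ w : f ≫ g = 0, (ShortComplex.mk f g w).ShortExact

/-- A class is closed under extensions. -/
def ExtensionClosed (X : Set D) : Prop :=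
  ∀ ⦃A E B : D⦄ (f : A ⟶ E) (g : E ⟶ B), A ∈ X → B ∈ X → IsSES f g → E ∈ X

/-- A class is closed under direct summands. -/
def SummandClosed (X : Set D) : Prop :=
  ∀ ⦃A B : D⦄ (i : A ⟶ B) (r : B ⟶ A), i ≫ r = 𝟙 A → B ∈ X → A ∈ X

open ZeroObject in
/-- A class is pointed, i.e. contains the zero object. -/
def Pointed (X : Set D) : Prop := (0 : D) ∈ X

/-- A class is closed under finite coproducts. -/
def FinCoprodClosed (X : Set D) : Prop :=
  Pointed X ∧ ∀ ⦃A B : D⦄, A ∈ X → B ∈ X → (A ⊞ B) ∈ X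

/-- `X` is a generator in `X''`: every object of `X''` is an epimorphic image of an object of `X`. -/
def GeneratorIn (X X'' : Set D) : Prop :=
  ∀ M ∈ X'', ∃ A ∈ X, ∃ p : A ⟶ M, Epi p

/-- `Y` is a cogenerator in `Y''`. -/
def CogeneratorIn (Y Y'' : Set D) : Prop :=
  ∀ N ∈ Y'', ∃ B ∈ Y, ∃ j : N ⟶ B, Mono j

/-- `ω` is a relative quasi-cogenerator in `X`. -/
def RelQuasiCogenerator (ω X : Set D) : Prop :=
  ∀ M ∈ X, ∃ W ∈ ω, ∃ M' ∈ X, ∃ (f : M ⟶ W) (g : W ⟶ M'), IsSES f g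

/-- `ω` is a relative cogenerator in `X`. -/
def RelCogenerator (ω X : Set D) : Prop :=
  ω ⊆ X ∧ RelQuasiCogenerator ω X

/-- `ν` is a relative quasi-generator in `Y`. -/
def RelQuasiGenerator (ν Y : Set D) : Prop :=
  ∀ N ∈ Y, ∃ V ∈ ν, ∃ N' ∈ Y, ∃ (f : N' ⟶ V) (g : V ⟶ N), IsSES f g

/-- `ν` is a relative generator in `Y`. -/
def RelGenerator (ν Y : Set D) : Prop :=
  ν ⊆ Y ∧ RelQuasiGenerator ν Y

/-- A (not necessarily exact) left resolution `⋯ → obj 1 → obj 0 → M → 0`. -/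
structure LeftRes (M : D) : Type (max u v) where
  obj : ℕ → D
  d : ∀ n : ℕ, obj (n+1) ⟶ obj n
  aug : obj 0 ⟶ M
  dd : ∀ n : ℕ, d (n+1) ≫ d n = 0
  daug : d 0 ≫ aug = 0

namespace LeftRes

variable {M : D} (R : LeftRes M)

/-- All terms of the resolution belong to the class `X`. -/
def InClass (X : Set D) : Prop := ∀ n, R.obj n ∈ X

/-- The resolution is `Hom(X,-)`-acyclic, i.e. proper. -/
def IsProper (X : Set D) : Prop :=
  ∀ A ∈ X,
    (∀ f : A ⟶ M, ∃ g : A ⟶ R.obj 0, g ≫ R.aug = f) ∧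
    (∀ f : A ⟶ R.obj 0, f ≫ R.aug = 0 → ∃ g : A ⟶ R.obj 1, g ≫ R.d 0 = f) ∧
    (∀ (n : ℕ) (f : A ⟶ R.obj (n+1)), f ≫ R.d n = 0 → ∃ g : A ⟶ R.obj (n+2), g ≫ R.d (n+1) = f)

/-- The resolution (with its augmentation) is `Hom(-,Y)`-acyclic. -/
def IsCoacyclic (Y : Set D) : Prop :=
  ∀ B ∈ Y,
    (∀ u : M ⟶ B, R.aug ≫ u = 0 → u = 0) ∧
    (∀ u : R.obj 0 ⟶ B, R.d 0 ≫ u = 0 → ∃ v : M ⟶ B, R.aug ≫ v = u) ∧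
    (∀ (n : ℕ) (u : R.obj (n+1) ⟶ B), R.d (n+1) ≫ u = 0 → ∃ v : R.obj n ⟶ B, R.d n ≫ v = u)

/-- The augmented complex `⋯ → obj 1 → obj 0 → M → 0` is exact. -/
def IsExactRes : Prop :=
  Epi R.aug ∧ (ShortComplex.mk (R.d 0) R.aug R.daug).Exact ∧
    ∀ n : ℕ, (ShortComplex.mk (R.d (n+1)) (R.d n) (R.dd n)).Exact

/-- The resolution is admissible: `obj 1 → obj 0 → M → 0` is exact. -/
def IsAdmissible : Prop :=
  Epi R.aug ∧ (ShortComplex.mk (R.d 0) R.aug R.daug).Exact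

end LeftRes

/-- The class of objects admitting a proper left `X`-resolution. -/
def LPRes (X : Set D) : Set D :=
  {M | ∃ R : LeftRes M, R.InClass X ∧ R.IsProper X}

/-- A (not necessarily exact) right resolution `0 → N → obj 0 → obj 1 → ⋯`. -/
structure RightRes (N : D) : Type (max u v) where
  obj : ℕ → D
  d : ∀ n : ℕ, obj n ⟶ obj (n+1)
  aug : N ⟶ obj 0
  dd : ∀ n : ℕ, d n ≫ d (n+1) = 0
  daug : aug ≫ d 0 = 0

namespace RightRes

variable {N : D} (S : RightRes N)

def InClass (Y : Set D) : Prop := ∀ n, S.obj n ∈ Y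

/-- The resolution is `Hom(-,Y)`-acyclic, i.e. proper. -/
def IsProper (Y : Set D) : Prop :=
  ∀ B ∈ Y,
    (∀ f : N ⟶ B, ∃ g : S.obj 0 ⟶ B, S.aug ≫ g = f) ∧
    (∀ u : S.obj 0 ⟶ B, S.aug ≫ u = 0 → ∃ v : S.obj 1 ⟶ B, S.d 0 ≫ v = u) ∧
    (∀ (n : ℕ) (u : S.obj (n+1) ⟶ B), S.d n ≫ u = 0 → ∃ v : S.obj (n+2) ⟶ B, S.d (n+1) ≫ v = u)

/-- The resolution (with its augmentation) is `Hom(X,-)`-acyclic. -/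
def IsCoacyclic (X : Set D) : Prop :=
  ∀ A ∈ X,
    (∀ u : A ⟶ N, u ≫ S.aug = 0 → u = 0) ∧
    (∀ u : A ⟶ S.obj 0, u ≫ S.d 0 = 0 → ∃ v : A ⟶ N, v ≫ S.aug = u) ∧
    (∀ (n : ℕ) (u : A ⟶ S.obj (n+1)), u ≫ S.d (n+1) = 0 → ∃ v : A ⟶ S.obj n, v ≫ S.d n = u)

/-- The augmented complex `0 → N → obj 0 → obj 1 → ⋯` is exact. -/
def IsExactRes : Prop :=
  Mono S.aug ∧ (ShortComplex.mk S.aug (S.d 0) S.daug).Exact ∧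
    ∀ n : ℕ, (ShortComplex.mk (S.d n) (S.d (n+1)) (S.dd n)).Exact

/-- The resolution is admissible: `0 → N → obj 0 → obj 1` is exact. -/
def IsAdmissible : Prop :=
  Mono S.aug ∧ (ShortComplex.mk S.aug (S.d 0) S.daug).Exact

end RightRes

/-- The class of objects admitting a proper right `Y`-resolution. -/
def RPRes (Y : Set D) : Set D :=
  {N | ∃ S : RightRes N, S.InClass Y ∧ S.IsProper Y}

/-- `(X,Y)` is a balanced pair with respect to `(Xt,Yt)`. -/
def IsBalancedPair (X Y Xt Yt : Set D) : Prop :=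
  X ⊆ Xt ∧ Xt ⊆ LPRes X ∧ Y ⊆ Yt ∧ Yt ⊆ RPRes Y ∧
  (∀ M ∈ Xt, ∃ R : LeftRes M, R.InClass X ∧ R.IsProper X ∧ R.IsCoacyclic Y) ∧
  (∀ N ∈ Yt, ∃ S : RightRes N, S.InClass Y ∧ S.IsProper Y ∧ S.IsCoacyclic X)

/-- `(X,Y)` is an admissible balanced pair with respect to `(Xt,Yt)`. -/
def IsAdmissibleBalancedPair (X Y Xt Yt : Set D) : Prop :=
  X ⊆ Xt ∧ Xt ⊆ LPRes X ∧ Y ⊆ Yt ∧ Yt ⊆ RPRes Y ∧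
  (∀ M ∈ Xt, ∃ R : LeftRes M, R.InClass X ∧ R.IsProper X ∧ R.IsCoacyclic Y ∧ R.IsAdmissible) ∧
  (∀ N ∈ Yt, ∃ S : RightRes N, S.InClass Y ∧ S.IsProper Y ∧ S.IsCoacyclic X ∧ S.IsAdmissible)

/-- Objects of left `X`-resolution dimension at most `n`. -/
def ResDimLE (X : Set D) : ℕ → Set D
  | 0 => X
  | (n+1) => {M | ∃ K ∈ ResDimLE X n, ∃ A ∈ X, ∃ (f : K ⟶ A) (g : A ⟶ M), IsSES f g}

/-- `X^∧` : objects of finite left `X`-resolution dimension. -/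
def ResHat (X : Set D) : Set D := {M | ∃ n, M ∈ ResDimLE X n}

/-- Objects of right `X`-resolution dimension at most `n`. -/
def CoresDimLE (X : Set D) : ℕ → Set D
  | 0 => X
  | (n+1) => {M | ∃ A ∈ X, ∃ K ∈ CoresDimLE X n, ∃ (f : M ⟶ A) (g : A ⟶ K), IsSES f g}

/-- `X^∨` : objects of finite right `X`-resolution dimension. -/
def CoresVee (X : Set D) : Set D := {M | ∃ n, M ∈ CoresDimLE X n}

section Ext

variable [HasExt.{w} D]

/-- `Ext^i (A, B) = 0`. -/
def ExtZero (A B : D) (i : ℕ) : Prop := Subsingleton (Abelian.Ext.{w} A B i)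

/-- `X^⊥`: all higher Ext's from objects of `X` vanish. -/
def ExtPerp (X : Set D) : Set D :=
  {N | ∀ A ∈ X, ∀ i : ℕ, 1 ≤ i → ExtZero.{w} A N i}

/-- `^⊥Y`: all higher Ext's into objects of `Y` vanish. -/
def PerpExt (Y : Set D) : Set D :=
  {M | ∀ B ∈ Y, ∀ i : ℕ, 1 ≤ i → ExtZero.{w} M B i}

/-- `[(X,ω);(ν,Y)]` is a finite balanced system. -/
structure IsFiniteBalancedSystem (X ω ν Y : Set D) : Prop where
  pointedX : Pointed X
  extClosedX : ExtensionClosed X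
  pointedY : Pointed Y
  extClosedY : ExtensionClosed Y
  relCogenOmega : RelCogenerator ω X
  idXomega : ∀ A ∈ X, ∀ W ∈ ω, ∀ i : ℕ, 1 ≤ i → ExtZero.{w} A W i
  relGenNu : RelGenerator ν Y
  pdYnu : ∀ V ∈ ν, ∀ B ∈ Y, ∀ i : ℕ, 1 ≤ i → ExtZero.{w} V B i
  ext1_hatX_nu : ∀ M ∈ ResHat X, ∀ V ∈ ν, ExtZero.{w} M V 1
  ext1_hatOmega_Y : ∀ H ∈ ResHat ω, ∀ B ∈ Y, ExtZero.{w} H B 1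
  ext1_omega_veeY : ∀ W ∈ ω, ∀ N ∈ CoresVee Y, ExtZero.{w} W N 1
  ext1_X_veeNu : ∀ A ∈ X, ∀ L ∈ CoresVee ν, ExtZero.{w} A L 1

/-- `[(X,ω);(ν,Y)]` is a strongly finite balanced system. -/
structure IsStronglyFiniteBalancedSystem (X ω ν Y : Set D)
    extends IsFiniteBalancedSystem.{w} X ω ν Y : Prop where
  pdYomega : ∀ W ∈ ω, ∀ B ∈ Y, ∀ i : ℕ, 1 ≤ i → ExtZero.{w} W B i
  idXnu : ∀ A ∈ X, ∀ V ∈ ν, ∀ i : ℕ, 1 ≤ i → ExtZero.{w} A V i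

end Ext

end BalancedSystems
namespace BalancedSystems

variable {D : Type u} [Category.{v} D] [Abelian D]

/-- A bounded below complex `⋯ → M 2 → M 1 → M 0 → 0`, where `M 0` plays the
role of the `(-1)`-st term `M₋₁`. -/
structure BBComplex (D : Type u) [Category.{v} D] [Abelian D] : Type (max u v) where
  M : ℕ → D
  d : ∀ n : ℕ, M (n+1) ⟶ M n
  dd : ∀ n : ℕ, d (n+1) ≫ d n = 0

/-- A bounded below complex is `Hom(X,-)`-acyclic. -/
def BBComplex.HomAcyclic (X : Set D) (K : BBComplex D) : Prop :=
  ∀ A ∈ X,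
    (∀ f : A ⟶ K.M 0, ∃ g : A ⟶ K.M 1, g ≫ K.d 0 = f) ∧
    (∀ (n : ℕ) (f : A ⟶ K.M (n+1)), f ≫ K.d n = 0 →
      ∃ g : A ⟶ K.M (n+2), g ≫ K.d (n+1) = f)

/-- A short complex `Z → Mo → Z'` (i.e. `0 → Z → Mo → Z' → 0`) is
`Hom(X,-)`-acyclic. -/
def ShortHomAcyclic (X : Set D) {Z Mo Z' : D} (ι : Z ⟶ Mo) (p : Mo ⟶ Z') : Prop :=
  ∀ A ∈ X,
    (∀ u : A ⟶ Z, u ≫ ι = 0 → u = 0) ∧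
    (∀ u : A ⟶ Mo, u ≫ p = 0 → ∃ v : A ⟶ Z, v ≫ ι = u) ∧
    (∀ u : A ⟶ Z', ∃ v : A ⟶ Mo, v ≫ p = u)

namespace LeftRes

variable {M : D} (R : LeftRes M)

/-- Precomposition with the differential, as a morphism of abelian groups
`Hom(obj n, N) →+ Hom(obj (n+1), N)`. -/
def precompHom (N : D) (n : ℕ) : (R.obj n ⟶ N) →+ (R.obj (n+1) ⟶ N) :=
  AddMonoidHom.mk' (fun g => R.d n ≫ g) (by intro a b; simp)

/-- Cocycles of the complex `Hom(R, N)` in degree `n`. -/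
def cocycles (N : D) (n : ℕ) : AddSubgroup (R.obj n ⟶ N) := (R.precompHom N n).ker

/-- The relative extension groups `Ext̲ⁱ_X(M,N)` computed from the proper left
`X`-resolution `R` of `M`: the `i`-th cohomology of `Hom(R, N)`. -/
def ExtGrp (N : D) : ℕ → Type v
  | 0 => R.cocycles N 0
  | (n+1) => R.cocycles N (n+1) ⧸
      ((R.precompHom N n).range.addSubgroupOf (R.cocycles N (n+1)))

noncomputable instance (N : D) : ∀ i, AddCommGroup (R.ExtGrp N i)
  | 0 => inferInstanceAs (AddCommGroup (R.cocycles N 0))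
  | (n+1) => inferInstanceAs (AddCommGroup (R.cocycles N (n+1) ⧸
      ((R.precompHom N n).range.addSubgroupOf (R.cocycles N (n+1)))))

/-- Functoriality of `Ext̲⁰_X(M,-)`: postcomposition on `0`-cocycles. -/
def ext0Map {N N' : D} (g : N ⟶ N') (x : R.ExtGrp N 0) : R.ExtGrp N' 0 :=
  (⟨(x : R.cocycles N 0).1 ≫ g, by
      have hx := (x : R.cocycles N 0).2
      simp only [cocycles, AddMonoidHom.mem_ker, precompHom, AddMonoidHom.mk'_apply] at hx ⊢
      rw [← Category.assoc, hx, zero_comp]⟩ : R.cocycles N' 0)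

end LeftRes

namespace RightRes

variable {N : D} (S : RightRes N)

/-- Postcomposition with the differential, as a morphism of abelian groups
`Hom(M, obj n) →+ Hom(M, obj (n+1))`. -/
def postcompHom (M : D) (n : ℕ) : (M ⟶ S.obj n) →+ (M ⟶ S.obj (n+1)) :=
  AddMonoidHom.mk' (fun g => g ≫ S.d n) (by intro a b; simp)

/-- Cocycles of the complex `Hom(M, S)` in degree `n`. -/
def cocycles (M : D) (n : ℕ) : AddSubgroup (M ⟶ S.obj n) := (S.postcompHom M n).ker

/-- The relative extension groups `Ext̄ⁱ_Y(M,N)` computed from the proper right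
`Y`-resolution `S` of `N`: the `i`-th cohomology of `Hom(M, S)`. -/
def ExtGrp (M : D) : ℕ → Type v
  | 0 => S.cocycles M 0
  | (n+1) => S.cocycles M (n+1) ⧸
      ((S.postcompHom M n).range.addSubgroupOf (S.cocycles M (n+1)))

noncomputable instance (M : D) : ∀ i, AddCommGroup (S.ExtGrp M i)
  | 0 => inferInstanceAs (AddCommGroup (S.cocycles M 0))
  | (n+1) => inferInstanceAs (AddCommGroup (S.cocycles M (n+1) ⧸
      ((S.postcompHom M n).range.addSubgroupOf (S.cocycles M (n+1)))))

end RightRes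

section ChainComplexes

/-- The class of complexes all of whose terms lie in `X`. -/
def chClass (X : Set D) : Set (ChainComplex D ℤ) := {K | ∀ n : ℤ, K.X n ∈ X}

/-- `ν̃` : the class of exact complexes all of whose cycle objects lie in `ν`. -/
noncomputable def tildeClass (ν : Set D) : Set (ChainComplex D ℤ) :=
  {K | (∀ n : ℤ, K.ExactAt n) ∧ ∀ n : ℤ, (kernel (K.d n (n-1)) : D) ∈ ν}

end ChainComplexes

end BalancedSystems
namespace BalancedSystems

variable {D : Type u} [Category.{v} D] [Abelian D]

section HomComplex

variable (K L : ChainComplex D ℤ)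

/-- The `m`-th term of the Hom-complex `Hom(K,L)`:
`∏ᵢ Hom(Kᵢ, L_{i+m})`. -/
abbrev HomCgrp (m : ℤ) : Type v := ∀ i : ℤ, K.X i ⟶ L.X (i + m)

/-- The differential `∂_m` of the Hom-complex `Hom(K,L)`, going from degree `m`
to degree `m' = m - 1`, given by `∂_m(f)ᵢ = ∂^L_{m+i} ∘ fᵢ − (−1)^m fᵢ₋₁ ∘ ∂^K_i`. -/
noncomputable def homCdiff (m m' : ℤ) (h : m' = m - 1) :
    HomCgrp K L m →+ HomCgrp K L m' :=
  AddMonoidHom.mk'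
    (fun f i => f i ≫ L.d (i + m) (i + m') -
      (m.negOnePow : ℤ) •
        (K.d i (i-1) ≫ f (i-1) ≫ eqToHom (congrArg L.X (show (i-1) + m = i + m' by omega))))
    (by
      intro a b
      funext i
      simp only [Pi.add_apply, Preadditive.add_comp, Preadditive.comp_add, smul_add]
      abel)

/-- The `m`-th cohomology group of the Hom-complex `Hom(K,L)`. -/
noncomputable def HomCoh (m : ℤ) : Type v :=
  (homCdiff K L m (m-1) rfl).ker ⧸
    ((homCdiff K L (m+1) m (by omega)).range.addSubgroupOf (homCdiff K L m (m-1) rfl).ker)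

noncomputable instance (m : ℤ) : AddCommGroup (HomCoh K L m) :=
  inferInstanceAs (AddCommGroup ((homCdiff K L m (m-1) rfl).ker ⧸
    ((homCdiff K L (m+1) m (by omega)).range.addSubgroupOf (homCdiff K L m (m-1) rfl).ker)))

end HomComplex

end BalancedSystems
namespace BalancedSystems

variable {D : Type u} [Category.{v} D] [Abelian D]

/-- `L_X(X',X'')`: objects of `X''` admitting a proper left `X`-resolution with
all cycles in `X'`. -/
noncomputable def LClass (X X' X'' : Set D) : Set D :=
  {M | M ∈ X'' ∧ ∃ R : LeftRes M, R.InClass X ∧ R.IsProper X ∧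
    (kernel R.aug : D) ∈ X' ∧ ∀ n : ℕ, (kernel (R.d n) : D) ∈ X'}

/-- `L̄_X(X',X'') := L_X(X',X'') ∪ X`. -/
noncomputable def LBarClass (X X' X'' : Set D) : Set D := LClass X X' X'' ∪ X

/-- `R^Y(Y'',Y')`: objects of `Y''` admitting a proper right `Y`-resolution with
all cocycles in `Y'`. -/
noncomputable def RClass (Y Y'' Y' : Set D) : Set D :=
  {N | N ∈ Y'' ∧ ∃ S : RightRes N, S.InClass Y ∧ S.IsProper Y ∧
    (cokernel S.aug : D) ∈ Y' ∧ ∀ n : ℕ, (cokernel (S.d n) : D) ∈ Y'}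

/-- `R̄^Y(Y'',Y') := R^Y(Y'',Y') ∪ Y`. -/
noncomputable def RBarClass (Y Y'' Y' : Set D) : Set D := RClass Y Y'' Y' ∪ Y

section Ext

variable [HasExt.{w} D]

/-- `[(X,ω);(ν,Y)]` is a balanced system with respect to `[(X',X'');(Y'',Y')]`. -/
def IsBalancedSystem (X ω ν Y X' X'' Y'' Y' : Set D) : Prop :=
  (X ⊆ X'' ∧ X' ⊆ X'' ∧ X'' ⊆ LPRes X) ∧
  (Y ⊆ Y'' ∧ Y' ⊆ Y'' ∧ Y'' ⊆ RPRes Y) ∧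
  GeneratorIn X X'' ∧
  CogeneratorIn Y Y'' ∧
  RelGenerator ν Y ∧
  RelCogenerator ω X ∧
  ((∀ M ∈ X'', ∀ V ∈ ν, ExtZero.{w} M V 1) ∧ (∀ L ∈ X', ∀ B ∈ Y, ExtZero.{w} L B 1)) ∧
  ((∀ W ∈ ω, ∀ N ∈ Y'', ExtZero.{w} W N 1) ∧ (∀ A ∈ X, ∀ P ∈ Y', ExtZero.{w} A P 1))

/-- `(X,Y)` is a complete hereditary cotorsion pair. -/
def IsCompleteHereditaryCotorsionPair (X Y : Set D) : Prop :=
  (∀ M : D, M ∈ X ↔ ∀ B ∈ Y, ExtZero.{w} M B 1) ∧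
  (∀ N : D, N ∈ Y ↔ ∀ A ∈ X, ExtZero.{w} A N 1) ∧
  (∀ M : D, ∃ K ∈ Y, ∃ A ∈ X, ∃ (f : K ⟶ A) (g : A ⟶ M), IsSES f g) ∧
  (∀ M : D, ∃ B ∈ Y, ∃ Q ∈ X, ∃ (f : M ⟶ B) (g : B ⟶ Q), IsSES f g) ∧
  (∀ A ∈ X, ∀ B ∈ Y, ∀ i : ℕ, 1 ≤ i → ExtZero.{w} A B i)

/-- `LPRes⁰(X)`: objects of `LPRes(X)` admitting an exact left `X`-resolution
with all cycles in `X^⊥`. -/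
noncomputable def LPRes0 (X : Set D) : Set D :=
  LPRes X ∩ {M | ∃ R : LeftRes M, R.InClass X ∧ R.IsExactRes ∧
    (kernel R.aug : D) ∈ ExtPerp.{w} X ∧ ∀ n : ℕ, (kernel (R.d n) : D) ∈ ExtPerp.{w} X}

/-- `RPRes⁰(Y)`: objects of `RPRes(Y)` admitting an exact right `Y`-resolution
with all cocycles in `^⊥Y`. -/
noncomputable def RPRes0 (Y : Set D) : Set D :=
  RPRes Y ∩ {N | ∃ S : RightRes N, S.InClass Y ∧ S.IsExactRes ∧
    (cokernel S.aug : D) ∈ PerpExt.{w} Y ∧ ∀ n : ℕ, (cokernel (S.d n) : D) ∈ PerpExt.{w} Y}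

end Ext

end BalancedSystems



namespace BalancedSystems

/-! ### `Ext¹` and splitting of extensions -/

section ExtOne

variable {D : Type u} [Category.{v} D] [Abelian D]

/-- The pushout of a short exact sequence along a morphism out of its left term is short exact,
with the same right term. -/
lemma IsSES.of_isPushout {A A' B P E : D} {f : A ⟶ B} {φ : A ⟶ A'} {b : B ⟶ P} {a : A' ⟶ P}
    (sq : IsPushout f φ b a) {g : B ⟶ E} (h : IsSES f g) :
    ∃ q : P ⟶ E, IsSES a q ∧ b ≫ q = g := by
  obtain ⟨w, hS⟩ := h
  have : Mono f := hS.mono_f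
  have : Epi g := hS.epi_g
  have ma : Mono a := (MorphismProperty.monomorphisms D).of_isPushout sq.flip (.infer_property f)
  have hq : a ≫ sq.desc g 0 (by simp [w]) = 0 := by simp
  have hb : b ≫ sq.desc g 0 (by simp [w]) = g := by simp
  refine ⟨sq.desc g 0 (by simp [w]), ⟨hq, ?_⟩, hb⟩
  have : Epi (sq.desc g 0 (by simp [w])) := epi_of_epi_fac hb
  refine { exact := ShortComplex.exact_of_g_is_cokernel _ ?_, mono_f := ma, epi_g := this }
  refine CokernelCofork.IsColimit.ofπ' _ _ fun {T} k hk => ⟨hS.exact.desc (b ≫ k) ?_, ?_⟩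
  · simp [reassoc_of% sq.w, hk]
  · apply sq.hom_ext
    · rw [reassoc_of% hb]; exact hS.exact.g_desc _ _
    · rw [reassoc_of% hq]; simp [hk]

/-- If `0 → A → P → M → 0` is exact and `P → W` is a monomorphism, then `W / A` is the pushout of
`W` and `M` under `P`. -/
lemma IsSES.comp_mono_of_isPushout {A P M W H : D} {a : A ⟶ P} {b : P ⟶ M} {w : P ⟶ W}
    {m : M ⟶ H} {h : W ⟶ H} [Mono w] (hab : IsSES a b) (sq : IsPushout w b h m) :
    IsSES (a ≫ w) h := by
  obtain ⟨z, hS⟩ := hab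
  have : Mono a := hS.mono_f
  have : Epi b := hS.epi_g
  have hh : Epi h := (MorphismProperty.epimorphisms D).of_isPushout sq (.infer_property b)
  have z' : (a ≫ w) ≫ h = 0 := by simp [sq.w, reassoc_of% z]
  refine ⟨z', ?_⟩
  refine { exact := ShortComplex.exact_of_g_is_cokernel _ ?_, mono_f := mono_comp _ _, epi_g := hh }
  refine CokernelCofork.IsColimit.ofπ' _ _ fun {T} k hk =>
    ⟨sq.desc k (hS.exact.desc (w ≫ k) ?_) ?_, ?_⟩
  · simpa using hk
  · exact (hS.exact.g_desc _ _).symm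
  · simp

/-- Let `π` be a morphism from a complex `K` concentrated in degrees `≤ 0` to an object `X` placed in
degree `0`, inducing an isomorphism on `H⁰`. As all of `K⁰` consists of cycles, it maps onto
`H⁰(K) ≅ X`, and `K⁰` placed in degree `0` maps to `K`. -/
lemma exists_epi_f_of_quasiIsoAt {X : D} {K : CochainComplex D ℤ}
    (π : K ⟶ (HomologicalComplex.single D (ComplexShape.up ℤ) 0).obj X)
    [K.IsStrictlyLE 0] [QuasiIsoAt π 0] :
    ∃ (p : K.X 0 ⟶ X) (s : (HomologicalComplex.single D (ComplexShape.up ℤ) 0).obj (K.X 0) ⟶ K),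
      Epi p ∧ s ≫ π = (HomologicalComplex.single D (ComplexShape.up ℤ) 0).map p := by
  have hd (j : ℤ) (hj : (ComplexShape.up ℤ).Rel 0 j) : K.d 0 j = 0 :=
    (K.isZero_of_isStrictlyLE 0 j (by have : (0 : ℤ) + 1 = j := hj; lia)).eq_of_tgt _ _
  let e := K.iCyclesIso 0 1 (by simp) (hd 1 (by simp))
  have : Epi (HomologicalComplex.cyclesMap π 0) := by
    have h : K.homologyπ 0 ≫ HomologicalComplex.homologyMap π 0 =
      HomologicalComplex.cyclesMap π 0 ≫ HomologicalComplex.homologyπ _ 0 :=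
        (HomologicalComplex.homologyπ_naturality π 0)
    have : Epi (HomologicalComplex.cyclesMap π 0 ≫ HomologicalComplex.homologyπ _ 0) := by
      rw [← h]; infer_instance
    have h' : HomologicalComplex.cyclesMap π 0 =
        (HomologicalComplex.cyclesMap π 0 ≫ HomologicalComplex.homologyπ _ 0) ≫
          ((HomologicalComplex.singleObjHomologySelfIso (ComplexShape.up ℤ) 0 X).hom ≫
            (HomologicalComplex.singleObjCyclesSelfIso (ComplexShape.up ℤ) 0 X).inv) := by
      simp
    rw [h']
    infer_instance
  let p := π.f 0 ≫ (HomologicalComplex.singleObjXSelf (ComplexShape.up ℤ) 0 X).hom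
  refine ⟨p, HomologicalComplex.mkHomFromSingle (𝟙 _) (fun j hj => by simp [hd j hj]), ?_, ?_⟩
  · have : p = e.inv ≫ HomologicalComplex.cyclesMap π 0 ≫
        (HomologicalComplex.singleObjCyclesSelfIso (ComplexShape.up ℤ) 0 X).hom := by
      rw [← cancel_epi e.hom, Iso.hom_inv_id_assoc]
      simp [p, e, HomologicalComplex.singleObjCyclesSelfIso_hom]
    rw [this]
    infer_instance
  · apply HomologicalComplex.from_single_hom_ext
    simp [p, HomologicalComplex.single_map_f_self]

/-- `Ext¹(-, Y)` is effaceable. Representing the class by a right fraction `X ← K → Y[1]` with `K`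
in degrees `≤ 0`, the epimorphism is `K⁰ → X`: composed with it the class factors through a
chain map from degree `0` to degree `-1`, which is zero. -/
lemma exists_epi_mk₀_comp_eq_zero [HasExt.{w} D] {X Y : D} (x : Abelian.Ext.{w} X Y 1) :
    ∃ (P : D) (p : P ⟶ X), Epi p ∧ (Abelian.Ext.mk₀ p).comp x (zero_add 1) = 0 := by
  let := HasDerivedCategory.standard D
  -- Viewing `Y[1]` as `Y` placed in degree `-1` makes `x` a morphism between images of complexes.
  let iY := ((DerivedCategory.singleFunctors D).shiftIso 1 (-1) 0 (by lia)).app Y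
  let φ : DerivedCategory.Q.obj ((CochainComplex.singleFunctor D 0).obj X) ⟶
      DerivedCategory.Q.obj ((CochainComplex.singleFunctor D (-1)).obj Y) :=
    x.hom ≫ iY.hom
  obtain ⟨K, _, π, h, g, hφ⟩ := DerivedCategory.right_fac_of_isStrictlyLE φ 0
  have : QuasiIso π := by
    rwa [DerivedCategory.isIso_Q_map_iff_quasiIso] at h
  have hπ : QuasiIsoAt π 0 := inferInstance
  obtain ⟨p, s, hp, hs⟩ : ∃ (p : K.X 0 ⟶ X)
      (s : (CochainComplex.singleFunctor D 0).obj (K.X 0) ⟶ K),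
      Epi p ∧ s ≫ π = (CochainComplex.singleFunctor D 0).map p :=
    @exists_epi_f_of_quasiIsoAt D _ _ X K π _ hπ
  refine ⟨_, p, hp, ?_⟩
  have hsg : s ≫ g = 0 := by
    apply HomologicalComplex.from_single_hom_ext
    apply (((CochainComplex.singleFunctor D (-1)).obj Y).isZero_of_isStrictlyLE
      (-1) 0 (by lia)).eq_of_tgt
  have key : DerivedCategory.Q.map ((CochainComplex.singleFunctor D 0).map p) ≫ φ = 0 := by
    rw [hφ, ← hs, Functor.map_comp, Category.assoc, IsIso.hom_inv_id_assoc, ← Functor.map_comp,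
      hsg, Functor.map_zero]
  apply Abelian.Ext.homEquiv.injective
  rw [← cancel_mono iY.hom]
  simp only [Abelian.Ext.comp_hom, Abelian.Ext.mk₀_hom, ShiftedHom.mk₀_comp,
    Abelian.Ext.zero_hom, zero_comp, Category.assoc]
  exact key

/-- By effaceability, any class `x ∈ Ext¹(X, Y)` is the pushout along some `f : ker p ⟶ Y` of the
class of `0 → ker p → P → X → 0`. Splitting the pushed out sequence extends `f` to `P`, which
forces `x = 0`. -/
lemma extZero_one_of_forall_split [HasExt.{w} D] {X Y : D}
    (H : ∀ (E : D) (i : Y ⟶ E) (q : E ⟶ X), IsSES i q → ∃ r : E ⟶ Y, i ≫ r = 𝟙 Y) :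
    ExtZero.{w} X Y 1 := by
  refine subsingleton_of_forall_eq 0 fun x => ?_
  obtain ⟨P, p, hp, hx⟩ := exists_epi_mk₀_comp_eq_zero x
  have hS : (ShortComplex.mk (kernel.ι p) p (by simp)).ShortExact :=
    { exact := ShortComplex.exact_of_f_is_kernel _ (kernelIsKernel p) }
  obtain ⟨y, rfl⟩ := Abelian.Ext.contravariant_sequence_exact₃ hS Y x hx (add_zero 1)
  obtain ⟨f, rfl⟩ := (Abelian.Ext.mk₀_bijective _ _).surjective y
  obtain ⟨q, hq, -⟩ := IsSES.of_isPushout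
    (IsPushout.of_hasPushout (kernel.ι p) f) (g := p) ⟨_, hS⟩
  obtain ⟨r, hr⟩ := H _ _ _ hq
  have hf : f = kernel.ι p ≫ pushout.inl _ _ ≫ r := by
    rw [pushout.condition_assoc, hr, Category.comp_id]
  rw [hf, ← Abelian.Ext.mk₀_comp_mk₀]
  exact hS.extClass_comp_assoc (h := add_zero 1) _

lemma ExtZero.exists_retraction [HasExt.{w} D] {X Y E : D} (h : ExtZero.{w} X Y 1)
    {i : Y ⟶ E} {q : E ⟶ X} (hiq : IsSES i q) : ∃ r : E ⟶ Y, i ≫ r = 𝟙 Y := by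
  obtain ⟨w, hS⟩ := hiq
  obtain ⟨y, hy⟩ := Abelian.Ext.contravariant_sequence_exact₁ hS Y (Abelian.Ext.mk₀ (𝟙 Y))
    (add_zero 1) (h.elim _ _)
  obtain ⟨r, rfl⟩ := (Abelian.Ext.mk₀_bijective _ _).surjective y
  refine ⟨r, (Abelian.Ext.mk₀_bijective _ _).injective ?_⟩
  rw [← hy, Abelian.Ext.mk₀_comp_mk₀]

lemma ExtZero.exists_section [HasExt.{w} D] {X Y E : D} (h : ExtZero.{w} X Y 1)
    {i : Y ⟶ E} {q : E ⟶ X} (hiq : IsSES i q) : ∃ s : X ⟶ E, s ≫ q = 𝟙 X := by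
  obtain ⟨r, hr⟩ := h.exists_retraction hiq
  obtain ⟨w, hS⟩ := hiq
  have : Epi q := hS.epi_g
  exact ⟨_, (ShortComplex.Splitting.ofExactOfRetraction _ hS.exact r hr this).s_g⟩

lemma ExtZero.of_isSES_middle [HasExt.{w} D] {X A B E : D} {f : A ⟶ B} {g : B ⟶ E} {n : ℕ}
    (hfg : IsSES f g) (hA : ExtZero.{w} X A n) (hE : ExtZero.{w} X E n) :
    ExtZero.{w} X B n := by
  obtain ⟨w, hS⟩ := hfg
  refine subsingleton_of_forall_eq 0 fun x => ?_
  obtain ⟨y, rfl⟩ := Abelian.Ext.covariant_sequence_exact₂ X hS x (hE.elim _ _)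
  rw [hA.elim y 0, Abelian.Ext.zero_comp]

lemma ExtZero.of_isSES_left [HasExt.{w} D] {Y A B E : D} {f : A ⟶ B} {g : B ⟶ E}
    (hfg : IsSES f g) (hB : ExtZero.{w} B Y 1) (hE : ExtZero.{w} E Y 2) :
    ExtZero.{w} A Y 1 := by
  obtain ⟨w, hS⟩ := hfg
  refine subsingleton_of_forall_eq 0 fun x => ?_
  obtain ⟨y, rfl⟩ := Abelian.Ext.contravariant_sequence_exact₁ hS Y x
    (show 1 + 1 = 2 from rfl) (hE.elim _ _)
  rw [hB.elim y 0, Abelian.Ext.comp_zero]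

end ExtOne

/-! ### Approximation of `X^∧` by `ω^∧` -/

section Approximation

variable {D : Type u} [Category.{v} D] [Abelian D] {𝒳 ω : Set D}

/-- Auslander-Buchweitz approximation: every object of `X`-resolution dimension at most `n` embeds
into an object of `ω`-resolution dimension at most `n`, with cokernel in `X`. -/
lemma exists_approximation (hXe : ExtensionClosed 𝒳) (hω : RelQuasiCogenerator ω 𝒳) (n : ℕ) :
    ∀ M ∈ ResDimLE 𝒳 n, ∃ H ∈ ResDimLE ω n, ∃ A ∈ 𝒳, ∃ (f : M ⟶ H) (g : H ⟶ A), IsSES f g := by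
  induction n with
  | zero => exact hω
  | succ n ih =>
    rintro M ⟨K, hK, A₀, hA₀, f, g, hfg⟩
    -- With `K ↪ H' ↠ A₁` and `P` the pushout of `A₀` and `H'` under `K`, there are exact sequences
    -- `H' ↪ P ↠ M` and `A₀ ↪ P ↠ A₁`. The latter gives `P ∈ X`, so `P` embeds into some `W ∈ ω`
    -- with cokernel `A₂ ∈ X`, and `H = W / H'` contains `M` with cokernel `A₂`.
    obtain ⟨H', hH', A₁, hA₁, f', g', hfg'⟩ := ih K hK
    have sq := IsPushout.of_hasPushout f f'
    obtain ⟨q, hq, -⟩ := hfg.of_isPushout sq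
    obtain ⟨q', hq', -⟩ := hfg'.of_isPushout sq.flip
    obtain ⟨W, hW, A₂, hA₂, a, b, hab⟩ := hω _ (hXe _ _ hA₀ hA₁ hq')
    have : Mono a := hab.2.mono_f
    have sq' := IsPushout.of_hasPushout a q
    obtain ⟨q₂, hq₂, -⟩ := hab.of_isPushout sq'
    exact ⟨_, ⟨H', hH', W, hW, _, _, hq.comp_mono_of_isPushout sq'⟩, A₂, hA₂, _, q₂, hq₂⟩

lemma extZero_one_of_mem_resHat [HasExt.{w} D] {ν : Set D}
    (hXe : ExtensionClosed 𝒳) (hω : RelQuasiCogenerator ω 𝒳)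
    (e2 : ∀ H ∈ ResHat ω, ∀ V ∈ ν, ExtZero.{w} H V 1)
    (e3 : ∀ A ∈ 𝒳, ∀ V ∈ ν, ExtZero.{w} A V 2)
    {M V : D} (hM : M ∈ ResHat 𝒳) (hV : V ∈ ν) : ExtZero.{w} M V 1 := by
  obtain ⟨n, hn⟩ := hM
  obtain ⟨H, hH, A, hA, f, g, hfg⟩ := exists_approximation hXe hω n M hn
  exact .of_isSES_left hfg (e2 H ⟨n, hH⟩ V hV) (e3 A hA V hV)

end Approximation

/-! ### Extensions by complexes in `ν̃` -/

section Complexes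

variable {D : Type u} [Category.{v} D] [Abelian D]

lemma IsSES.eval {K L M : ChainComplex D ℤ} {f : K ⟶ L} {g : L ⟶ M} (h : IsSES f g) (n : ℤ) :
    IsSES (f.f n) (g.f n) := by
  obtain ⟨w, hS⟩ := h
  exact ⟨by rw [← HomologicalComplex.comp_f, w, HomologicalComplex.zero_f],
    hS.map_of_exact (HomologicalComplex.eval D _ n)⟩

lemma mem_resDimLE_of_chClass {X : Set D} (m : ℕ) :
    ∀ K ∈ ResDimLE (chClass X) m, ∀ n : ℤ, K.X n ∈ ResDimLE X m := by
  induction m with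
  | zero => exact fun K hK => hK
  | succ m ih =>
    rintro K ⟨L, hL, A, hA, f, g, hfg⟩ n
    exact ⟨L.X n, ih L hL n, A.X n, hA n, _, _, hfg.eval n⟩

/-- An exact complex breaks up into short exact sequences `0 → Zⱼ → Vⱼ → Zᵢ → 0`, `j = i + 1`. -/
lemma isSES_kernel {V : ChainComplex D ℤ} (hV : ∀ n, V.ExactAt n) {i j k : ℤ}
    (hij : i + 1 = j) (hki : k + 1 = i) :
    IsSES (kernel.ι (V.d j i)) (kernel.lift (V.d i k) (V.d j i) (V.d_comp_d _ _ _)) := by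
  have w : kernel.ι (V.d j i) ≫ kernel.lift (V.d i k) (V.d j i) (V.d_comp_d _ _ _) = 0 := by
    ext; simp
  have hex : (V.sc' j i k).Exact :=
    (V.exactAt_iff' j i k (by simp [← hij]) (by simp [← hki])).1 (hV i)
  refine ⟨w, ?_⟩
  have : Epi (kernel.lift (V.d i k) (V.d j i) (V.d_comp_d _ _ _)) := hex.epi_kernelLift
  refine { exact := ShortComplex.exact_of_f_is_kernel _ ?_ }
  refine KernelFork.IsLimit.ofι' _ _ fun {T} t ht =>
    ⟨kernel.lift (V.d j i) t ?_, kernel.lift_ι _ _ _⟩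
  simpa using ht =≫ kernel.ι (V.d i k)

lemma kernel_mem_of_tildeClass {ν : Set D} {V : ChainComplex D ℤ} (hV : V ∈ tildeClass ν)
    {i j : ℤ} (hij : i + 1 = j) : kernel (V.d j i) ∈ ν := by
  obtain rfl : i = j - 1 := by lia
  exact hV.2 j

variable [HasExt.{w} D]

/-- For `V ∈ ν̃` the differential `Vᵢ₊₁ → Vᵢ` has a section over the cycles of `Vᵢ`, and this section
extends to all of `Vᵢ`. -/
lemma exists_section_on_cycles {ν : Set D} (e1 : ∀ V ∈ ν, ∀ V' ∈ ν, ExtZero.{w} V V' 1)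
    {V : ChainComplex D ℤ} (hV : V ∈ tildeClass ν) (i j : ℤ) (hij : i + 1 = j) :
    ∃ σ : V.X i ⟶ V.X j, ∀ {T : D} (z : T ⟶ V.X i), z ≫ V.d i (i - 1) = 0 →
      z ≫ σ ≫ V.d j i = z := by
  have hi : i - 1 + 1 = i := by lia
  have hi' : i - 1 - 1 + 1 = i - 1 := by lia
  obtain ⟨ρ, hρ⟩ := (e1 _ (kernel_mem_of_tildeClass hV hi') _
    (kernel_mem_of_tildeClass hV hi)).exists_retraction (isSES_kernel hV.1 hi hi')
  obtain ⟨t, ht⟩ := (e1 _ (kernel_mem_of_tildeClass hV hi) _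
    (kernel_mem_of_tildeClass hV hij)).exists_section (isSES_kernel hV.1 hij hi)
  refine ⟨ρ ≫ t, fun z hz => ?_⟩
  have h₁ : t ≫ V.d j i = kernel.ι (V.d i (i - 1)) := by
    simpa using ht =≫ kernel.ι (V.d i (i - 1))
  have h₂ : kernel.lift _ z hz ≫ kernel.ι _ = z := kernel.lift_ι _ _ _
  rw [← h₂]
  simp only [Category.assoc, h₁, reassoc_of% hρ]

lemma exists_contraction {ν : Set D} (e1 : ∀ V ∈ ν, ∀ V' ∈ ν, ExtZero.{w} V V' 1)
    {V : ChainComplex D ℤ} (hV : V ∈ tildeClass ν) :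
    ∃ s : ∀ i j, (ComplexShape.down ℤ).Rel j i → (V.X i ⟶ V.X j),
      Homotopy.nullHomotopicMap' s = 𝟙 V := by
  choose σ hσ using exists_section_on_cycles e1 hV
  -- `σ` only splits `d` on cycles; `𝟙 - d ≫ σ` is the projection onto the cycles.
  refine ⟨fun i j hij => (𝟙 _ - V.d i (i - 1) ≫ σ (i - 1) i (by lia)) ≫ σ i j hij, ?_⟩
  ext n
  have h₁ : (ComplexShape.down ℤ).Rel (n + 1) n := rfl
  have h₀ : (ComplexShape.down ℤ).Rel n (n - 1) := show n - 1 + 1 = n by lia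
  have hd : V.d n (n - 1) ≫ σ (n - 1) n h₀ ≫ V.d n (n - 1) = V.d n (n - 1) :=
    hσ (n - 1) n h₀ (V.d n (n - 1)) (V.d_comp_d _ _ _)
  have he := hσ n (n + 1) h₁ (𝟙 _ - V.d n (n - 1) ≫ σ (n - 1) n h₀) (by simp [hd])
  rw [Homotopy.nullHomotopicMap'_f h₁ h₀]
  simp only [Category.assoc, he]
  simp

/-- An extension of `K` by `V ∈ ν̃` splits as soon as `Ext¹(Kₙ, ν) = 0` for all `n`: it splits
degreewise, and `V` is contractible. -/
theorem extZero_one_chainComplex [HasExt.{w'} (ChainComplex D ℤ)] {ν : Set D}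
    (e1 : ∀ V ∈ ν, ∀ V' ∈ ν, ExtZero.{w} V V' 1) {K V : ChainComplex D ℤ}
    (hV : V ∈ tildeClass ν) (hK : ∀ n, ∀ Z ∈ ν, ExtZero.{w} (K.X n) Z 1) :
    ExtZero.{w'} K V 1 := by
  obtain ⟨s, hs⟩ := exists_contraction e1 hV
  refine extZero_one_of_forall_split fun E i q hiq => ?_
  have hKV (n : ℤ) : ExtZero.{w} (K.X n) (V.X n) 1 :=
    have hn : n - 1 + 1 = n := by lia
    have hn' : n - 1 - 1 + 1 = n - 1 := by lia
    .of_isSES_middle (isSES_kernel hV.1 hn hn')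
      (hK n _ (kernel_mem_of_tildeClass hV hn)) (hK n _ (kernel_mem_of_tildeClass hV hn'))
  choose ρ hρ using fun n => (hKV n).exists_retraction (hiq.eval n)
  -- The degreewise retraction `ρ` need not be a chain map, but the null-homotopic map given by
  -- `ρ ≫ s` is one, and it restricts on `V` to the map given by `s`, which is the identity.
  refine ⟨Homotopy.nullHomotopicMap' fun a b hab => ρ a ≫ s a b hab, ?_⟩
  rw [Homotopy.comp_nullHomotopicMap', ← hs]
  simp only [reassoc_of% hρ]

end Complexes

end BalancedSystems

open BalancedSystems in
/-- Let `X` be pointed and closed under extensions, `ω` a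
relative quasi-cogenerator in `X`, and `ν` a class with
`Ext¹(ν,ν) = Ext¹(ω^∧,ν) = Ext²(X,ν) = 0`. Then `Ext¹_{Ch}(C•,V•) = 0` for
every complex `C•` with all terms in `X^∧` and every `V• ∈ ν̃`; in particular
this holds for every `C• ∈ Ch(X)^∧`. -/
theorem statement15 {C : Type u} [Category.{v} C] [Abelian C]
    [HasExt.{w} C] [HasExt.{w'} (ChainComplex C ℤ)]
    (𝒳 ω ν : Set C)
    (h1 : IsoClosed 𝒳) (h2 : IsoClosed ω) (h3 : IsoClosed ν)
    (hXp : Pointed 𝒳) (hXe : ExtensionClosed 𝒳)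
    (hω : RelQuasiCogenerator ω 𝒳)
    (e1 : ∀ V ∈ ν, ∀ V' ∈ ν, ExtZero.{w} V V' 1)
    (e2 : ∀ H ∈ ResHat ω, ∀ V ∈ ν, ExtZero.{w} H V 1)
    (e3 : ∀ A ∈ 𝒳, ∀ V ∈ ν, ExtZero.{w} A V 2) :
    (∀ Cc : ChainComplex C ℤ, (∀ n : ℤ, Cc.X n ∈ ResHat 𝒳) →
      ∀ Vc ∈ tildeClass ν, ExtZero.{w'} Cc Vc 1) ∧
    (∀ Cc ∈ ResHat (chClass 𝒳), ∀ Vc ∈ tildeClass ν, ExtZero.{w'} Cc Vc 1) := by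
  have key : ∀ K : ChainComplex C ℤ, (∀ n : ℤ, K.X n ∈ ResHat 𝒳) →
      ∀ V ∈ tildeClass ν, ExtZero.{w'} K V 1 := fun K hK V hV =>
    extZero_one_chainComplex e1 hV fun n _ hZ =>
      extZero_one_of_mem_resHat hXe hω e2 e3 (hK n) hZ
  refine ⟨key, fun K hK => key K fun n => ?_⟩
  obtain ⟨m, hm⟩ := hK
  exact ⟨m, mem_resDimLE_of_chClass m K hm n⟩
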